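/- arXiv:2110.13886 — 3 statements merged into one kernel-verified Lean document; each statement's English description precedes it below -/
import Mathlib

section
/- For every integer e ≥ 1, the presented group G_e = ⟨x, y ∣ x^{3^{e+1}} = 1, y^3 = 1, [y,x] = x^{3^e}⟩ is a finite group of order 3^{e+2}. -/
/-- Relations of `G_e = ⟨x, y ∣ x^(3^(e+1)) = 1, y^3 = 1, [y,x] = x^(3^e)⟩`,
with `[a,b] = a⁻¹ * b⁻¹ * a * b`, generators `x = of 0`, `y = of 1`. -/
def Grels (e : ℕ) : Set (FreeGroup (Fin 2)) :=
  {FreeGroup.of 0 ^ 3 ^ (e + 1), FreeGroup.of 1 ^ 3,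
   (FreeGroup.of 1)⁻¹ * (FreeGroup.of 0)⁻¹ * FreeGroup.of 1 * FreeGroup.of 0 *
     (FreeGroup.of 0 ^ 3 ^ e)⁻¹}

/-! The relation `[y, x] = x ^ k` says `y⁻¹ x y = x ^ (1 - k)`. If `u = 1 - k` satisfies `u ^ n = 1`
in `ZMod m`, adding `x ^ m = y ^ n = 1` therefore presents the semidirect product `ZMod m ⋊ ZMod n`
in which `1` acts as multiplication by `u`: both groups have the same universal property, with `y`
corresponding to the inverse of the generator of `ZMod n`. For `m = q ^ (e + 1)`, `n = q` and
`k = q ^ e` with `1 ≤ e`, both `k ^ 2` and `q * k` vanish in `ZMod m`, so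
`(1 - k) ^ q = 1 - q * k = 1`. -/

open Subgroup Multiplicative SemidirectProduct

theorem one_sub_pow_of_sq_eq_zero {R : Type*} [CommRing R] {z : R} (hz : z ^ 2 = 0) (n : ℕ) :
    (1 - z) ^ n = 1 - n * z := by
  simpa [sub_eq_add_neg, Polynomial.derivative_X_pow] using
    (Polynomial.X ^ n : Polynomial R).eval_add_of_sq_eq_zero 1 (-z) (by rwa [neg_sq])

theorem one_sub_pow_pow_eq_one {R : Type*} [CommRing R] {q e : ℕ} (he : 1 ≤ e)
    (hq : (q : R) ^ (e + 1) = 0) : (1 - (q : R) ^ e) ^ q = 1 := by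
  have hsq : ((q : R) ^ e) ^ 2 = 0 := by
    rw [← pow_mul]
    exact pow_eq_zero_of_le (by lia) hq
  rw [one_sub_pow_of_sq_eq_zero hsq, ← pow_succ', hq, sub_zero]

theorem comp_eq_conj_comp_of_closure_eq_top {N H G : Type*} [Group N] [Group H] [Group G]
    {φ : H →* MulAut N} {f₁ : N →* G} {f₂ : H →* G} {s : Set N} {t : Set H}
    (hs : closure s = ⊤) (ht : closure t = ⊤)
    (h : ∀ b ∈ t, ∀ a ∈ s, f₁ (φ b a) = f₂ b * f₁ a * (f₂ b)⁻¹) (b : H) :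
    f₁.comp (φ b).toMonoidHom = (MulAut.conj (f₂ b)).toMonoidHom.comp f₁ := by
  suffices ∀ a, f₁ (φ b a) = f₂ b * f₁ a * (f₂ b)⁻¹ from MonoidHom.ext this
  have hb : b ∈ closure t := ht ▸ mem_top b
  induction hb using closure_induction with
  | mem b hb =>
    have heq : f₁.comp (φ b).toMonoidHom = (MulAut.conj (f₂ b)).toMonoidHom.comp f₁ :=
      MonoidHom.eq_of_eqOn_dense hs (h b hb)
    exact DFunLike.congr_fun heq
  | one => simp
  | mul b c _ _ hb hc => simp [hb, hc, mul_assoc]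
  | inv b _ hb =>
    intro a
    have hinv := hb ((φ b)⁻¹ a)
    rw [MulAut.apply_inv_self] at hinv
    simp [hinv, mul_assoc]

section ZModHom

variable {n : ℕ} {G : Type*} [Group G]

theorem zpowers_ofAdd_one : zpowers (ofAdd (1 : ZMod n)) = ⊤ := by
  refine (eq_top_iff' _).2 fun x ↦ ?_
  obtain ⟨i, hi⟩ := ZMod.intCast_surjective x.toAdd
  exact ⟨i, by simp [← ofAdd_zsmul, hi]⟩

theorem closure_ofAdd_one : Subgroup.closure {ofAdd (1 : ZMod n)} = ⊤ :=
  (zpowers_eq_closure _).symm.trans zpowers_ofAdd_one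

/-- The homomorphism from the cyclic group `ZMod n`, written multiplicatively, that sends the
generator `1` to an element `g` with `g ^ n = 1`. -/
noncomputable def zmodHom (g : G) (hg : g ^ n = 1) : Multiplicative (ZMod n) →* G :=
  monoidHomOfForallMemZpowers ((eq_top_iff' _).1 zpowers_ofAdd_one) (g' := g) <| by
    rw [orderOf_ofAdd_eq_addOrderOf, ZMod.addOrderOf_one]
    exact orderOf_dvd_of_pow_eq_one hg

@[simp]
theorem zmodHom_ofAdd_one (g : G) (hg : g ^ n = 1) : zmodHom g hg (ofAdd 1) = g :=
  monoidHomOfForallMemZpowers_apply_gen ..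

theorem zmodHom_ext {f g : Multiplicative (ZMod n) →* G} (h : f (ofAdd 1) = g (ofAdd 1)) :
    f = g :=
  MonoidHom.eq_of_eqOn_dense closure_ofAdd_one (Set.eqOn_singleton.2 h)

theorem ofAdd_one_pow_self : ofAdd (1 : ZMod n) ^ n = 1 := by
  simp [← ofAdd_nsmul]

end ZModHom

section Metacyclic

variable {m n k : ℕ} {u : (ZMod m)ˣ}

/-- The action of the cyclic group `ZMod n` on the cyclic group `ZMod m` by automorphisms in which
`1` acts as multiplication by the unit `u`, where `u ^ n = 1`. -/
noncomputable def zmodAction (u : (ZMod m)ˣ) (hu : u ^ n = 1) :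
    Multiplicative (ZMod n) →* MulAut (Multiplicative (ZMod m)) :=
  (MulAutMultiplicative (ZMod m)).symm.toMonoidHom.comp (AddAut.mulLeft.comp (zmodHom u hu))

@[simp]
theorem zmodAction_ofAdd_one (hu : u ^ n = 1) (i : ZMod m) :
    zmodAction u hu (ofAdd 1) (ofAdd i) = ofAdd (u * i) := by
  simp only [zmodAction, MonoidHom.comp_apply, zmodHom_ofAdd_one]
  rfl

/-- The split metacyclic group `ZMod m ⋊ ZMod n` in which the generator of the second factor
raises elements of the first to the power `u`. -/
abbrev SplitMetacyclic (u : (ZMod m)ˣ) (hu : u ^ n = 1) : Type :=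
  Multiplicative (ZMod m) ⋊[zmodAction u hu] Multiplicative (ZMod n)

namespace SplitMetacyclic

theorem inl_ofAdd_one_pow (hu : u ^ n = 1) : (inl (ofAdd 1) : SplitMetacyclic u hu) ^ m = 1 := by
  rw [← map_pow, ofAdd_one_pow_self, map_one]

theorem inr_ofAdd_one_inv_pow (hu : u ^ n = 1) :
    (inr (ofAdd 1)⁻¹ : SplitMetacyclic u hu) ^ n = 1 := by
  rw [← map_pow, inv_pow, ofAdd_one_pow_self, inv_one, map_one]

theorem commutator_inr_inv_inl (hu : u ^ n = 1) (hk : (u : ZMod m) = 1 - k) :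
    (inr (ofAdd 1)⁻¹)⁻¹ * (inl (ofAdd 1))⁻¹ * inr (ofAdd 1)⁻¹ * inl (ofAdd 1) =
      (inl (ofAdd 1) : SplitMetacyclic u hu) ^ k := by
  have h : ofAdd ((u : ZMod m) * -1) * ofAdd 1 = ofAdd 1 ^ k := by
    simp [hk, ← ofAdd_nsmul]
  rw [← map_inv inr, inv_inv, ← map_inv inl, ← inl_aut, ← map_mul, ← map_pow, ← h, ← ofAdd_neg,
    zmodAction_ofAdd_one]

section Lift

variable {G : Type*} [Group G] {x y : G}

/-- The homomorphism out of a split metacyclic group determined by elements `x` and `y` subject to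
the relations `x ^ m = 1`, `y ^ n = 1` and `[y, x] = x ^ (1 - u)`, where `y` is the image of the
inverse of the generator of the second factor. -/
noncomputable def lift (hu : u ^ n = 1) (hk : (u : ZMod m) = 1 - k) (hx : x ^ m = 1)
    (hy : y ^ n = 1) (hxy : y⁻¹ * x⁻¹ * y * x = x ^ k) : SplitMetacyclic u hu →* G :=
  SemidirectProduct.lift (zmodHom x hx) (zmodHom y⁻¹ (by rw [inv_pow, hy, inv_one])) <|
    comp_eq_conj_comp_of_closure_eq_top closure_ofAdd_one closure_ofAdd_one <| by
      rintro _ rfl _ rfl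
      have h : ofAdd (u : ZMod m) = ofAdd 1 * (ofAdd 1 ^ k)⁻¹ := by
        simp [hk, ← ofAdd_nsmul, sub_eq_add_neg]
      rw [zmodAction_ofAdd_one, mul_one, h]
      simp [← hxy, mul_assoc]

variable (hu : u ^ n = 1) (hk : (u : ZMod m) = 1 - k) (hx : x ^ m = 1) (hy : y ^ n = 1)
  (hxy : y⁻¹ * x⁻¹ * y * x = x ^ k)

@[simp]
theorem lift_inl_ofAdd_one : lift hu hk hx hy hxy (inl (ofAdd 1)) = x := by
  simp [lift]

@[simp]
theorem lift_inr_ofAdd_one : lift hu hk hx hy hxy (inr (ofAdd 1)) = y⁻¹ := by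
  simp [lift]

end Lift

theorem hom_ext {G : Type*} [Group G] {hu : u ^ n = 1} {f g : SplitMetacyclic u hu →* G}
    (hl : f (inl (ofAdd 1)) = g (inl (ofAdd 1))) (hr : f (inr (ofAdd 1)) = g (inr (ofAdd 1))) :
    f = g :=
  SemidirectProduct.hom_ext (zmodHom_ext hl) (zmodHom_ext hr)

end SplitMetacyclic

/-- Relations of `⟨x, y ∣ x ^ m = 1, y ^ n = 1, [y, x] = x ^ k⟩`, with `[a, b] = a⁻¹ * b⁻¹ * a * b`
and generators `x = of 0`, `y = of 1`. -/
def metacyclicRels (m n k : ℕ) : Set (FreeGroup (Fin 2)) :=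
  {FreeGroup.of 0 ^ m, FreeGroup.of 1 ^ n,
   (FreeGroup.of 1)⁻¹ * (FreeGroup.of 0)⁻¹ * FreeGroup.of 1 * FreeGroup.of 0 *
     (FreeGroup.of 0 ^ k)⁻¹}

namespace metacyclicRels

theorem lift_eq_one {G : Type*} [Group G] {x y : G} (hx : x ^ m = 1) (hy : y ^ n = 1)
    (hxy : y⁻¹ * x⁻¹ * y * x = x ^ k) :
    ∀ r ∈ metacyclicRels m n k, FreeGroup.lift ![x, y] r = 1 := by
  rintro r (rfl | rfl | rfl) <;> simp [hx, hy, hxy]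

theorem of_zero_pow : (PresentedGroup.of 0 : PresentedGroup (metacyclicRels m n k)) ^ m = 1 :=
  PresentedGroup.one_of_mem (.inl rfl)

theorem of_one_pow : (PresentedGroup.of 1 : PresentedGroup (metacyclicRels m n k)) ^ n = 1 :=
  PresentedGroup.one_of_mem (.inr (.inl rfl))

theorem commutator_of_one_of_zero :
    (PresentedGroup.of 1)⁻¹ * (PresentedGroup.of 0)⁻¹ * PresentedGroup.of 1 * PresentedGroup.of 0 =
      (PresentedGroup.of 0 : PresentedGroup (metacyclicRels m n k)) ^ k :=
  mul_inv_eq_one.1 (PresentedGroup.one_of_mem (rels := metacyclicRels m n k) (.inr (.inr rfl)))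

/-- The isomorphism between the group presented by `metacyclicRels m n k` and the split metacyclic
group with unit `1 - k`, matching `x` and `y⁻¹` with the generators of the two factors. -/
noncomputable def equivSplitMetacyclic (hu : u ^ n = 1) (hk : (u : ZMod m) = 1 - k) :
    PresentedGroup (metacyclicRels m n k) ≃* SplitMetacyclic u hu :=
  MonoidHom.toMulEquiv
    (PresentedGroup.toGroup <| lift_eq_one (SplitMetacyclic.inl_ofAdd_one_pow hu)
      (SplitMetacyclic.inr_ofAdd_one_inv_pow hu) (SplitMetacyclic.commutator_inr_inv_inl hu hk))
    (SplitMetacyclic.lift hu hk of_zero_pow of_one_pow commutator_of_one_of_zero)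
    (PresentedGroup.ext fun i ↦ by fin_cases i <;> simp)
    (SplitMetacyclic.hom_ext (by simp) (by simp))

theorem card_presentedGroup [NeZero n] (hk : (1 - k : ZMod m) ^ n = 1) :
    Nat.card (PresentedGroup (metacyclicRels m n k)) = m * n := by
  have e := equivSplitMetacyclic (Units.pow_ofPowEqOne hk (NeZero.ne n)) rfl
  rw [Nat.card_congr e.toEquiv, SemidirectProduct.card, Nat.card_congr toAdd,
    Nat.card_congr toAdd, Nat.card_zmod, Nat.card_zmod]

end metacyclicRels

end Metacyclic

theorem stmt0_general (q e : ℕ) [NeZero q] (he : 1 ≤ e) :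
    Finite (PresentedGroup (metacyclicRels (q ^ (e + 1)) q (q ^ e))) ∧
    Nat.card (PresentedGroup (metacyclicRels (q ^ (e + 1)) q (q ^ e))) = q ^ (e + 2) := by
  have hk : (1 - (q ^ e : ℕ) : ZMod (q ^ (e + 1))) ^ q = 1 := by
    rw [Nat.cast_pow]
    exact one_sub_pow_pow_eq_one he (by rw [← Nat.cast_pow, ZMod.natCast_self])
  have hcard := (metacyclicRels.card_presentedGroup hk).trans (pow_succ q (e + 1)).symm
  exact ⟨Nat.finite_of_card_ne_zero (hcard ▸ pow_ne_zero _ (NeZero.ne q)), hcard⟩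

theorem stmt0 (e : ℕ) (he : 1 ≤ e) :
    Finite (PresentedGroup (Grels e)) ∧
    Nat.card (PresentedGroup (Grels e)) = 3 ^ (e + 2) :=
  stmt0_general 3 e he
end

section
/- For every integer e ≥ 2, the presented group G_e = ⟨x, y ∣ x^{3^{e+1}} = 1, y^3 = 1, [y,x] = x^{3^e}⟩ is not a σ-group: there is no automorphism σ of G_e such that for every g ∈ G_e the image of σ(g) in the abelianization G_e/[G_e,G_e] equals the inverse of the image of g. -/
/-!
The element `z = x ^ 3 ^ e = [y, x]` is central and generates the commutator subgroup, so its
image under an endomorphism `σ` inverting the abelianization can be computed in two ways.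
Commutators are bilinear, so `[y⁻¹ d, x⁻¹ c] = [y, x]` for central `c`, `d`, whence `σ z = z`;
powers invert, so `σ z = (x⁻¹ c) ^ 3 ^ e = z⁻¹`. Thus `z ^ 2 = 1`, and `z = 1` because `z` has odd
order. But `z ≠ 1`: the group acts on `ZMod (3 ^ (e + 1))` by `x : t ↦ t + 1` and
`y : t ↦ (1 + 3 ^ e) * t`, and there `z` is the translation by `3 ^ e`.
-/

open Subgroup
open scoped commutatorElement

section Group

variable {G : Type*} [Group G]

theorem normal_of_le_center {H : Subgroup G} (hH : H ≤ center G) : H.Normal where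
  conj_mem h hh g := by rwa [mem_center_iff.1 (hH hh) g, mul_inv_cancel_right]

theorem mem_center_of_closure_eq_top {S : Set G} (hS : closure S = ⊤) {z : G}
    (hz : ∀ s ∈ S, Commute s z) : z ∈ center G := by
  rw [← centralizer_univ, ← coe_top, ← hS, centralizer_closure]
  exact mem_centralizer_iff.2 hz

theorem isMulCommutative_of_closure_eq_top {S : Set G} (hS : closure S = ⊤)
    (hcomm : ∀ a ∈ S, ∀ b ∈ S, Commute a b) : IsMulCommutative G := by
  have hcenter : center G = ⊤ := by
    rw [eq_top_iff, ← hS, closure_le]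
    exact fun b hb => mem_center_of_closure_eq_top hS fun a ha => hcomm a ha b hb
  exact ⟨⟨fun a b => mem_center_iff.1 (hcenter ▸ mem_top b) a⟩⟩

theorem commutator_le_of_closure_eq_top {S : Set G} (hS : closure S = ⊤) (K : Subgroup G)
    [K.Normal] (hK : ∀ a ∈ S, ∀ b ∈ S, ⁅a, b⁆ ∈ K) : commutator G ≤ K := by
  have hgen : closure (QuotientGroup.mk' K '' S) = ⊤ := by
    rw [← MonoidHom.map_closure, hS, map_top_of_surjective _ (QuotientGroup.mk'_surjective K)]
  refine Normal.quotient_commutative_iff_commutator_le.1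
    (isMulCommutative_of_closure_eq_top hgen ?_)
  rintro _ ⟨a, ha, rfl⟩ _ ⟨b, hb, rfl⟩
  rw [← commutatorElement_eq_one_iff_commute, ← map_commutatorElement (QuotientGroup.mk' K)]
  exact (QuotientGroup.eq_one_iff _).2 (hK a ha b hb)

theorem commutator_le_zpowers_commutatorElement {a b : G} (hgen : closure {a, b} = ⊤)
    (hcenter : ⁅a, b⁆ ∈ center G) : commutator G ≤ zpowers ⁅a, b⁆ := by
  have : (zpowers ⁅a, b⁆).Normal := normal_of_le_center (zpowers_le.2 hcenter)
  refine commutator_le_of_closure_eq_top hgen _ ?_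
  simp only [Set.mem_insert_iff, Set.mem_singleton_iff, forall_eq_or_imp, forall_eq,
    commutatorElement_self, one_mem, mem_zpowers, true_and, and_true]
  exact commutatorElement_inv a b ▸ inv_mem (mem_zpowers ⁅a, b⁆)

theorem commute_pow_of_commutatorElement_pow_eq_one {a b : G} {n : ℕ}
    (hcomm : Commute ⁅a, b⁆ b) (hn : ⁅a, b⁆ ^ n = 1) : Commute a (b ^ n) := by
  have hconj : a * b ^ n * a⁻¹ = b ^ n := calc
    a * b ^ n * a⁻¹ = (a * b * a⁻¹) ^ n := conj_pow.symm
    _ = (⁅a, b⁆ * b) ^ n := by rw [commutatorElement_def, inv_mul_cancel_right]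
    _ = b ^ n := by rw [hcomm.mul_pow, hn, one_mul]
  exact mul_inv_eq_iff_eq_mul.1 hconj

theorem commutatorElement_mul_of_mem_center (a b : G) {c d : G} (hc : c ∈ center G)
    (hd : d ∈ center G) : ⁅a * c, b * d⁆ = ⁅a, b⁆ := by
  have hc' : ⁅c, b * d⁆ = 1 :=
    commutatorElement_eq_one_iff_mul_comm.2 (mem_center_iff.1 hc (b * d)).symm
  have hd' : ⁅a, d⁆ = 1 := commutatorElement_eq_one_iff_mul_comm.2 (mem_center_iff.1 hd a)
  rw [commutatorElement_mul_left_eq_conj_mul, hc', commutatorElement_mul_right_eq_mul_conj, hd']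
  group

theorem commutatorElement_inv_inv_of_mem_center {a b : G} (h : ⁅a, b⁆ ∈ center G) :
    ⁅a⁻¹, b⁻¹⁆ = ⁅a, b⁆ := calc
  ⁅a⁻¹, b⁻¹⁆ = (b * a)⁻¹ * ⁅a, b⁆ * (b * a) := by simp only [commutatorElement_def]; group
  _ = ⁅a, b⁆ := by rw [mem_center_iff.1 h, inv_mul_cancel_right]

end Group

/-- The endomorphism `σ` induces inversion on the abelianization of `G`; a `σ`-group is a group
with an automorphism of this kind. -/
def InvertsAbelianization {G : Type*} [Group G] (σ : G →* G) : Prop :=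
  ∀ g : G, Abelianization.of (σ g) = (Abelianization.of g)⁻¹

namespace InvertsAbelianization

variable {G : Type*} [Group G] {σ : G →* G}

theorem exists_eq_inv_mul (hσ : InvertsAbelianization σ) (g : G) :
    ∃ c ∈ commutator G, σ g = g⁻¹ * c := by
  refine ⟨g * σ g, ?_, (inv_mul_cancel_left g _).symm⟩
  rw [← Abelianization.ker_of, MonoidHom.mem_ker, map_mul, hσ, mul_inv_cancel]

theorem map_commutatorElement (hσ : InvertsAbelianization σ) (hG : commutator G ≤ center G)
    (a b : G) : σ ⁅a, b⁆ = ⁅a, b⁆ := by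
  obtain ⟨c, hc, hac⟩ := hσ.exists_eq_inv_mul a
  obtain ⟨d, hd, hbd⟩ := hσ.exists_eq_inv_mul b
  have hab : ⁅a, b⁆ ∈ center G := hG (commutator_mem_commutator (mem_top a) (mem_top b))
  rw [_root_.map_commutatorElement, hac, hbd,
    commutatorElement_mul_of_mem_center _ _ (hG hc) (hG hd),
    commutatorElement_inv_inv_of_mem_center hab]

theorem map_pow (hσ : InvertsAbelianization σ) (hG : commutator G ≤ center G) {n : ℕ}
    (hn : ∀ c ∈ commutator G, c ^ n = 1) (g : G) : σ (g ^ n) = (g ^ n)⁻¹ := by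
  obtain ⟨c, hc, hgc⟩ := hσ.exists_eq_inv_mul g
  have hcomm : Commute g⁻¹ c := mem_center_iff.1 (hG hc) g⁻¹
  rw [_root_.map_pow, hgc, hcomm.mul_pow, hn c hc, mul_one, inv_pow]

theorem pow_eq_one_of_commutatorElement_eq_pow (hσ : InvertsAbelianization σ) {a b : G}
    (hgen : closure {a, b} = ⊤) {n : ℕ} (hodd : Odd n) (hab : ⁅a, b⁆ = a ^ n)
    (hn : (a ^ n) ^ n = 1) : a ^ n = 1 := by
  have hcomm : Commute b (a ^ n) := by
    apply commute_pow_of_commutatorElement_pow_eq_one <;> rw [← commutatorElement_inv, hab]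
    · exact (Commute.pow_self a n).inv_left
    · rw [inv_pow, hn, inv_one]
  have hcenter : a ^ n ∈ center G := by
    refine mem_center_of_closure_eq_top hgen ?_
    rintro _ (rfl | rfl)
    exacts [Commute.self_pow _ n, hcomm]
  have hle : commutator G ≤ zpowers (a ^ n) :=
    hab ▸ commutator_le_zpowers_commutatorElement hgen (hab ▸ hcenter)
  have hG : commutator G ≤ center G := hle.trans (zpowers_le.2 hcenter)
  have hexp : ∀ c ∈ commutator G, c ^ n = 1 := fun c hc => by
    obtain ⟨k, rfl⟩ := mem_zpowers_iff.1 (hle hc)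
    rw [← zpow_natCast, zpow_comm, zpow_natCast, hn, one_zpow]
  have hfix : σ (a ^ n) = a ^ n := hab ▸ hσ.map_commutatorElement hG a b
  have hsq : (a ^ n) ^ 2 = 1 := by
    rw [pow_two, ← mul_inv_cancel (a ^ n), ← hσ.map_pow hG hexp a, hfix]
  exact (pow_eq_one_iff_of_coprime hodd.coprime_two_left).1 ⟨hsq, hn⟩

end InvertsAbelianization

section AffinePermutations

variable {R : Type*}

theorem commutatorElement_inv_toPermHom_inv_addRight [Ring R] (u : Rˣ) (a : R) :
    ⁅(MulAction.toPermHom Rˣ R u)⁻¹, (Equiv.addRight a)⁻¹⁆ = Equiv.addRight (a - ↑u⁻¹ * a) := by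
  ext t
  change ↑u⁻¹ * ((u : R) * (t + a) + -a) = t + (a - ↑u⁻¹ * a)
  rw [mul_add, Units.inv_mul_cancel_left, mul_neg, add_sub_assoc', sub_eq_add_neg, add_assoc]

theorem one_add_pow_of_mul_self_eq_zero [Semiring R] {w : R} (hw : w * w = 0) (m : ℕ) :
    (1 + w) ^ m = 1 + m * w := by
  induction m with
  | zero => rw [pow_zero, Nat.cast_zero, zero_mul, add_zero]
  | succ m ih =>
    rw [pow_succ, ih, mul_add, mul_one, add_mul, one_mul, mul_assoc, hw, mul_zero, add_zero,
      Nat.cast_succ, add_mul, one_mul, add_assoc]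

/-- The unit `1 + w` of a ring, with inverse `1 - w`, for `w` of square zero; multiplication by it
is the action of `y` on `ZMod (3 ^ (e + 1))`. -/
@[simps]
def unitOneAdd [Ring R] (w : R) (hw : w * w = 0) : Rˣ where
  val := 1 + w
  inv := 1 - w
  val_inv := by rw [add_mul, one_mul, mul_sub, mul_one, hw, sub_zero, sub_add_cancel]
  inv_val := by rw [sub_mul, one_mul, mul_add, mul_one, hw, add_zero, add_sub_cancel_right]

theorem unitOneAdd_pow_eq_one [Ring R] {w : R} (hw : w * w = 0) {m : ℕ} (hm : m * w = 0) :
    unitOneAdd w hw ^ m = 1 := by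
  ext
  rw [Units.val_pow_eq_pow_val, val_unitOneAdd, one_add_pow_of_mul_self_eq_zero hw, hm, add_zero,
    Units.val_one]

theorem natCast_mul_natCast_pow_eq_zero (p e : ℕ) :
    (p : ZMod (p ^ (e + 1))) * (p ^ e : ℕ) = 0 := by
  rw [← Nat.cast_mul, ← pow_succ', ZMod.natCast_self]

theorem natCast_pow_mul_self_eq_zero (p : ℕ) {e : ℕ} (he : e ≠ 0) :
    ((p ^ e : ℕ) : ZMod (p ^ (e + 1))) * (p ^ e : ℕ) = 0 := by
  rw [← Nat.cast_mul, ← pow_add, ZMod.natCast_eq_zero_iff]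
  exact pow_dvd_pow p (by lia)

end AffinePermutations

theorem closure_inv_of_zero_inv_of_one (rels : Set (FreeGroup (Fin 2))) :
    closure {(PresentedGroup.of 0 : PresentedGroup rels)⁻¹, (PresentedGroup.of 1)⁻¹} = ⊤ := by
  have hrange : Set.range (PresentedGroup.of (rels := rels)) = {.of 0, .of 1} := by
    ext g
    simp only [Set.mem_range, Fin.exists_fin_two, Set.mem_insert_iff, Set.mem_singleton_iff,
      eq_comm (a := g)]
  rw [← Set.inv_singleton, ← Set.inv_insert, closure_inv, ← hrange,
    PresentedGroup.closure_range_of]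

namespace Grels

variable {e : ℕ}

-- The paper's commutator `[y, x]` is Mathlib's `⁅y⁻¹, x⁻¹⁆`.
theorem forall_map_eq_one_iff {H : Type*} [Group H] (f : FreeGroup (Fin 2) →* H) :
    (∀ r ∈ Grels e, f r = 1) ↔ f (.of 0) ^ 3 ^ (e + 1) = 1 ∧ f (.of 1) ^ 3 = 1 ∧
      ⁅(f (.of 1))⁻¹, (f (.of 0))⁻¹⁆ = f (.of 0) ^ 3 ^ e := by
  simp only [Grels, Set.forall_mem_insert, Set.mem_singleton_iff, forall_eq, map_mul, map_inv,
    map_pow, mul_inv_eq_one, commutatorElement_def, inv_inv]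

/-- The action of `G_e` on `ZMod (3 ^ (e + 1))` in which `x` is the translation by `1` and `y` is
multiplication by `1 + 3 ^ e`. -/
def affineAction (he : e ≠ 0) :
    PresentedGroup (Grels e) →* Equiv.Perm (ZMod (3 ^ (e + 1))) :=
  PresentedGroup.toGroup (f := ![Equiv.addRight 1,
    MulAction.toPermHom _ _ (unitOneAdd _ (natCast_pow_mul_self_eq_zero 3 he))]) <| by
    refine (forall_map_eq_one_iff _).2 ⟨?_, ?_, ?_⟩
    · rw [FreeGroup.lift_apply_of, Matrix.cons_val_zero, Equiv.nsmul_addRight, nsmul_one,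
        ZMod.natCast_self, Equiv.addRight_zero]
    · rw [FreeGroup.lift_apply_of, Matrix.cons_val_one, Matrix.cons_val_zero, ← map_pow,
        unitOneAdd_pow_eq_one _ (natCast_mul_natCast_pow_eq_zero 3 e), map_one]
    · rw [FreeGroup.lift_apply_of, FreeGroup.lift_apply_of, Matrix.cons_val_one,
        Matrix.cons_val_zero, Matrix.cons_val_zero, commutatorElement_inv_toPermHom_inv_addRight,
        Equiv.nsmul_addRight, nsmul_one, mul_one, val_inv_unitOneAdd, sub_sub_cancel]

theorem affineAction_of_zero (he : e ≠ 0) :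
    affineAction he (PresentedGroup.of 0) = Equiv.addRight 1 :=
  PresentedGroup.toGroup.of _

theorem of_zero_pow_ne_one (he : e ≠ 0) :
    (PresentedGroup.of 0 : PresentedGroup (Grels e)) ^ 3 ^ e ≠ 1 := by
  intro h
  have htranslation : Equiv.addRight ((3 ^ e : ℕ) : ZMod (3 ^ (e + 1))) = 1 := by
    rw [← nsmul_one, ← Equiv.nsmul_addRight, ← affineAction_of_zero he, ← map_pow, h, map_one]
  have hzero : ((3 ^ e : ℕ) : ZMod (3 ^ (e + 1))) = 0 := by
    simpa using Equiv.congr_fun htranslation 0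
  have hdvd : 3 ^ (e + 1) ∣ 3 ^ e := (ZMod.natCast_eq_zero_iff _ _).1 hzero
  exact Nat.not_succ_le_self e ((Nat.pow_dvd_pow_iff_le_right (by norm_num)).1 hdvd)

end Grels

theorem stmt3_general (e : ℕ) (he : e ≠ 0) :
    ¬ ∃ σ : PresentedGroup (Grels e) →* PresentedGroup (Grels e), InvertsAbelianization σ := by
  rintro ⟨σ, hσ⟩
  obtain ⟨hx, -, hyx⟩ := (Grels.forall_map_eq_one_iff (PresentedGroup.mk (Grels e))).1
    fun _ => PresentedGroup.one_of_mem
  set x : PresentedGroup (Grels e) := PresentedGroup.mk _ (.of 0)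
  have hxy : ⁅x⁻¹, (PresentedGroup.mk (Grels e) (.of 1))⁻¹⁆ = x⁻¹ ^ 3 ^ e := by
    rw [← commutatorElement_inv, hyx, inv_pow]
  have hpow : (x⁻¹ ^ 3 ^ e) ^ 3 ^ e = 1 := by
    have hle : e + 1 ≤ e + e := by lia
    rw [← pow_mul, ← pow_add, inv_pow, inv_eq_one]
    exact orderOf_dvd_iff_pow_eq_one.1
      ((orderOf_dvd_of_pow_eq_one hx).trans (pow_dvd_pow 3 hle))
  refine Grels.of_zero_pow_ne_one he (inv_eq_one.1 ?_)
  rw [← inv_pow]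
  exact hσ.pow_eq_one_of_commutatorElement_eq_pow (closure_inv_of_zero_inv_of_one _)
    (Odd.pow (by decide)) hxy hpow

theorem stmt3 (e : ℕ) (he : 2 ≤ e) :
    ¬ ∃ σ : PresentedGroup (Grels e) ≃* PresentedGroup (Grels e),
      ∀ g : PresentedGroup (Grels e),
        Abelianization.of (σ g) = (Abelianization.of g)⁻¹ :=
  fun ⟨σ, hσ⟩ => stmt3_general e (by omega) ⟨σ.toMonoidHom, hσ⟩
end

section
/- For every integer e ≥ 3, there exists a finite metabelian group T of order 3^{e+4}, generated by two elements x and y satisfying x^{3^{e+1}} = 1, y^3 = s₃, and t₃ = s₃, whose abelianization is isomorphic to (ZMod (3^{e+1})) × (ZMod 3). -/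
/-- The commutator `[a,b] = a⁻¹ * b⁻¹ * a * b`. -/
def comm' {G : Type*} [Group G] (a b : G) : G := a⁻¹ * b⁻¹ * a * b

/-- `s₂ = [y,x]` and `s_j = [s_(j-1), x]` for `j ≥ 3`. -/
def sgen {G : Type*} [Group G] (x y : G) : ℕ → G
  | 0 => 1
  | 1 => 1
  | 2 => comm' y x
  | (n + 3) => comm' (sgen x y (n + 2)) x

/-- `t_j = [s_(j-1), y]` for `j ≥ 3`. -/
def tgenD {G : Type*} [Group G] (x y : G) (j : ℕ) : G := comm' (sgen x y (j - 1)) y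

/-- `t₂ = [y,x]` and `t_j = [t_(j-1), y]` for `j ≥ 3`. -/
def tgenB {G : Type*} [Group G] (x y : G) : ℕ → G
  | 0 => 1
  | 1 => 1
  | 2 => comm' y x
  | (n + 3) => comm' (tgenB x y (n + 2)) y

/-- A σ-group: a group admitting an automorphism acting as inversion on the
abelianization. -/
def IsSigmaGroup (G : Type*) [Group G] : Prop :=
  ∃ σ : G ≃* G, ∀ g : G, Abelianization.of (σ g) = (Abelianization.of g)⁻¹

/-- A group is metabelian if its commutator subgroup is abelian, i.e. the second
derived subgroup is trivial. -/
def IsMetabelian (G : Type*) [Group G] : Prop := derivedSeries G 2 = ⊥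

/-!
Let `m` be odd and `m ∣ n`. On the abelian group `V = ℤ/m² × ℤ/m`, with standard generators
`y` and `s`, put the class-two Lie bracket determined by `[s, y] = m • y`; its nilpotent derivation
`D : y ↦ s, s ↦ m • y` has `D ^ 3 = 0`. Since `2` is invertible, the Baer correspondence
`u * v = u + v + ½ [u, v]` turns `V` into a group in which powers are multiples and commutators are
Lie brackets, and `ℤ/n` acts on it by the automorphisms `exp (k D) = 1 + k D + ½ k² D²`. In the
semidirect product `V ⋊ ℤ/n` all the required relations become linear identities: `s₃` and `t₃` are
both `m • y`, that is, the `m`-th power of `y`. The theorem is the case `m = 3`, `n = 3 ^ (e + 1)`.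
-/

section Commutators

variable {G H : Type*} [Group G] [Group H]

open scoped commutatorElement in
lemma comm'_eq_commutatorElement (a b : G) : comm' a b = ⁅a⁻¹, b⁻¹⁆ := by
  rw [comm', commutatorElement_def, inv_inv, inv_inv]

lemma map_comm' (f : G →* H) (a b : G) : f (comm' a b) = comm' (f a) (f b) := by
  simp only [comm', map_mul, map_inv]

lemma comm'_mem {K : Subgroup G} {a b : G} (ha : a ∈ K) (hb : b ∈ K) : comm' a b ∈ K :=
  mul_mem (mul_mem (mul_mem (inv_mem ha) (inv_mem hb)) ha) hb

lemma comm'_mem_commutator (a b : G) : comm' a b ∈ commutator G :=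
  comm'_eq_commutatorElement a b ▸
    Subgroup.commutator_mem_commutator (Subgroup.mem_top _) (Subgroup.mem_top _)

lemma comm'_inl_inr {φ : H →* MulAut G} (g : G) (h : H) :
    comm' (SemidirectProduct.inl g : G ⋊[φ] H) (SemidirectProduct.inr h) =
      SemidirectProduct.inl (g⁻¹ * φ h⁻¹ g) := by
  rw [map_mul, map_inv, SemidirectProduct.inl_aut, inv_inv, map_inv, comm']
  group

lemma isMetabelian_iff_commutator_le_centralizer :
    IsMetabelian G ↔ commutator G ≤ Subgroup.centralizer (commutator G) := by
  rw [IsMetabelian, derivedSeries_succ, derivedSeries_one,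
    Subgroup.commutator_eq_bot_iff_le_centralizer]

end Commutators

/-- Half of the bracket of a Lie ring of nilpotency class at most two on `V`: a biadditive
alternating map whose iterates vanish. Halving is built in so that no division is needed in the
Baer group law. -/
structure HalfBracket (V : Type*) [AddCommGroup V] where
  /-- The biadditive map `(u, v) ↦ ½ [u, v]`. -/
  toHom : V →+ V →+ V
  apply_self : ∀ v, toHom v v = 0
  apply_apply_left : ∀ u v w, toHom (toHom u v) w = 0

namespace HalfBracket

variable {V : Type*} [AddCommGroup V] (B : HalfBracket V)

lemma neg_apply_swap (u v : V) : -B.toHom v u = B.toHom u v := by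
  have h := B.apply_self (u + v)
  simp only [map_add, AddMonoidHom.add_apply, B.apply_self, zero_add, add_zero] at h
  exact neg_eq_of_add_eq_zero_right h

lemma apply_apply_right (u v w : V) : B.toHom u (B.toHom v w) = 0 := by
  rw [← B.neg_apply_swap, B.apply_apply_left, neg_zero]

end HalfBracket

/-- The group attached to a class-two Lie ring `V` by the Baer correspondence: the set `V` with
multiplication `u * v = u + v + ½ [u, v]`. The constructor and the projection are named after the
exponential and the logarithm. -/
@[ext]
structure BaerGroup {V : Type*} [AddCommGroup V] (B : HalfBracket V) where
  exp ::
  log : V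

namespace BaerGroup

variable {V : Type*} [AddCommGroup V] {B : HalfBracket V}

instance : Mul (BaerGroup B) := ⟨fun g h => exp (g.log + h.log + B.toHom g.log h.log)⟩
instance : One (BaerGroup B) := ⟨exp 0⟩
instance : Inv (BaerGroup B) := ⟨fun g => exp (-g.log)⟩

lemma log_mul (g h : BaerGroup B) : (g * h).log = g.log + h.log + B.toHom g.log h.log := rfl
lemma log_one : (1 : BaerGroup B).log = 0 := rfl
lemma log_inv (g : BaerGroup B) : g⁻¹.log = -g.log := rfl

instance : Group (BaerGroup B) := Group.ofLeftAxioms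
  (fun g h k => by
    ext
    simp only [log_mul, map_add, AddMonoidHom.add_apply, B.apply_apply_left, B.apply_apply_right]
    abel)
  (fun g => by ext; simp only [log_mul, log_one, map_zero, AddMonoidHom.zero_apply, zero_add,
    add_zero])
  (fun g => by ext; simp only [log_mul, log_inv, log_one, map_neg, AddMonoidHom.neg_apply,
    B.apply_self, neg_add_cancel, neg_zero, add_zero])

lemma log_pow (g : BaerGroup B) (k : ℕ) : (g ^ k).log = k • g.log := by
  induction k with
  | zero => rw [pow_zero, zero_nsmul, log_one]
  | succ k ih =>
    rw [pow_succ, log_mul, ih, map_nsmul, AddMonoidHom.nsmul_apply, B.apply_self, smul_zero,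
      add_zero, succ_nsmul]

lemma log_zpow (g : BaerGroup B) (k : ℤ) : (g ^ k).log = k • g.log := by
  cases k with
  | ofNat k => rw [Int.ofNat_eq_natCast, zpow_natCast, natCast_zsmul, log_pow]
  | negSucc k => rw [zpow_negSucc, negSucc_zsmul, log_inv, log_pow]

lemma log_comm' (g h : BaerGroup B) : (comm' g h).log = 2 • B.toHom g.log h.log := by
  have swap := B.neg_apply_swap g.log h.log
  simp only [comm', log_mul, log_inv, map_add, map_neg, map_zero, AddMonoidHom.add_apply,
    AddMonoidHom.neg_apply, AddMonoidHom.zero_apply, B.apply_self, B.apply_apply_left, neg_zero,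
    ← swap]
  abel

lemma commute_of_toHom_eq_zero {g h : BaerGroup B} (hgh : B.toHom g.log h.log = 0) :
    g * h = h * g := by
  ext
  rw [log_mul, log_mul, ← B.neg_apply_swap h.log, hgh, neg_zero, add_comm g.log]

/-- The action on a Baer group by automorphisms induced by an additive action on the underlying
Lie ring that preserves the bracket. -/
def autHom {H : Type*} [Group H] (E : H →* AddMonoid.End V)
    (hE : ∀ h u v, B.toHom (E h u) (E h v) = E h (B.toHom u v)) : H →* MulAut (BaerGroup B) where
  toFun h :=
    { toFun g := exp (E h g.log)
      invFun g := exp (E h⁻¹ g.log)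
      left_inv g := by
        ext
        change (E h⁻¹ * E h) g.log = g.log
        rw [← map_mul, inv_mul_cancel, map_one, AddMonoid.End.one_apply]
      right_inv g := by
        ext
        change (E h * E h⁻¹) g.log = g.log
        rw [← map_mul, mul_inv_cancel, map_one, AddMonoid.End.one_apply]
      map_mul' g k := by ext; simp only [log_mul, map_add, hE] }
  map_one' := by ext g; simp
  map_mul' h k := by ext g; simp

lemma log_autHom_apply {H : Type*} [Group H] (E : H →* AddMonoid.End V)
    (hE : ∀ h u v, B.toHom (E h u) (E h v) = E h (B.toHom u v)) (h : H) (g : BaerGroup B) :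
    (autHom E hE h g).log = E h g.log :=
  rfl

end BaerGroup

section ZModSelfExtension

variable (m : ℕ)

/-- The inclusion in the extension `0 → ℤ/m → ℤ/m² → ℤ/m → 0`. -/
def zmodIncl : ZMod m →+ ZMod (m ^ 2) :=
  ZMod.lift m ⟨(AddMonoidHom.mulLeft (m : ZMod (m ^ 2))).comp (Int.castAddHom _), by
    simp [← sq, ← Nat.cast_pow]⟩

/-- The projection in the extension `0 → ℤ/m → ℤ/m² → ℤ/m → 0`. -/
def zmodProj : ZMod (m ^ 2) →+* ZMod m := ZMod.castHom (dvd_pow_self m two_ne_zero) _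

variable {m}

lemma zmodIncl_intCast (k : ℤ) : zmodIncl m k = m * k := ZMod.lift_coe _ _ k

lemma zmodIncl_one : zmodIncl m 1 = m := by simpa using zmodIncl_intCast (m := m) 1

lemma zmodProj_zmodIncl (b : ZMod m) : zmodProj m (zmodIncl m b) = 0 := by
  obtain ⟨k, rfl⟩ := ZMod.intCast_surjective b
  rw [zmodIncl_intCast, map_mul, map_natCast, ZMod.natCast_self, zero_mul]

lemma exists_zsmul_zmodIncl_one_of_zmodProj_eq_zero {a : ZMod (m ^ 2)} (ha : zmodProj m a = 0) :
    ∃ k : ℤ, k • zmodIncl m 1 = a := by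
  obtain ⟨l, rfl⟩ := ZMod.intCast_surjective a
  rw [map_intCast, ZMod.intCast_zmod_eq_zero_iff_dvd] at ha
  obtain ⟨k, rfl⟩ := ha
  refine ⟨k, ?_⟩
  rw [zmodIncl_one, zsmul_eq_mul]
  push_cast
  ring

variable (m) [Invertible (2 : ZMod m)]

lemma zmodIncl_invOf_two_add_self : zmodIncl m ⅟2 + zmodIncl m ⅟2 = zmodIncl m 1 := by
  rw [← map_add, ← two_mul, mul_invOf_self]

/-- Half of the Lie bracket on `ℤ/m² × ℤ/m` with `[s, y] = m • y`, where `y = (1, 0)` and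
`s = (0, 1)`. -/
def planeBracket : HalfBracket (ZMod (m ^ 2) × ZMod m) where
  toHom := AddMonoidHom.mk' (fun u => AddMonoidHom.mk'
      (fun v => (zmodIncl m (⅟2 * (u.2 * zmodProj m v.1 - zmodProj m u.1 * v.2)), 0))
      (fun v w => Prod.ext
        (by
          rw [Prod.fst_add, Prod.fst_add, Prod.snd_add, ← map_add (zmodIncl m), map_add]
          ring_nf)
        (add_zero 0).symm))
    (fun u v => AddMonoidHom.ext fun w => Prod.ext
      (by
        rw [AddMonoidHom.add_apply, Prod.fst_add]
        simp only [AddMonoidHom.mk'_apply]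
        rw [Prod.fst_add, Prod.snd_add, ← map_add (zmodIncl m), map_add]
        congr 1
        ring)
      (add_zero 0).symm)
  apply_self v := by simp [mul_comm v.2]
  apply_apply_left u v w := by simp [zmodProj_zmodIncl]

lemma planeBracket_apply (u v : ZMod (m ^ 2) × ZMod m) :
    (planeBracket m).toHom u v =
      (zmodIncl m (⅟2 * (u.2 * zmodProj m v.1 - zmodProj m u.1 * v.2)), 0) :=
  rfl

/-- The exponential of the multiple `k D` of the nilpotent derivation `D : y ↦ s, s ↦ m • y` of
`ℤ/m² × ℤ/m`. -/
def planeFlow (k : ZMod m) : AddMonoid.End (ZMod (m ^ 2) × ZMod m) :=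
  AddMonoidHom.mk' (fun u =>
      (u.1 + zmodIncl m (k * u.2 + ⅟2 * k ^ 2 * zmodProj m u.1), u.2 + k * zmodProj m u.1))
    (fun u v => by
      ext
      · simp only [Prod.fst_add, Prod.snd_add, map_add, mul_add]; abel
      · simp only [Prod.fst_add, Prod.snd_add, map_add]; ring)

variable {m}

lemma planeFlow_apply (k : ZMod m) (u : ZMod (m ^ 2) × ZMod m) :
    planeFlow m k u =
      (u.1 + zmodIncl m (k * u.2 + ⅟2 * k ^ 2 * zmodProj m u.1), u.2 + k * zmodProj m u.1) :=
  rfl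

lemma zmodProj_planeFlow_fst (k : ZMod m) (u : ZMod (m ^ 2) × ZMod m) :
    zmodProj m (planeFlow m k u).1 = zmodProj m u.1 := by
  rw [planeFlow_apply, map_add, zmodProj_zmodIncl, add_zero]

lemma planeFlow_zero : planeFlow m 0 = 1 := by
  ext u : 1
  simp [planeFlow_apply]

lemma planeFlow_add (k l : ZMod m) : planeFlow m (k + l) = planeFlow m k * planeFlow m l := by
  ext u : 1
  rw [AddMonoid.End.coe_mul, Function.comp_apply, planeFlow_apply k, zmodProj_planeFlow_fst]
  simp only [planeFlow_apply, add_assoc, ← map_add]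
  congr 3
  · linear_combination k * l * zmodProj m u.1 * invOf_mul_self (2 : ZMod m)
  · ring

/-- The one-parameter group `k ↦ exp (k D)`. -/
def planeFlowHom (m : ℕ) [Invertible (2 : ZMod m)] :
    Multiplicative (ZMod m) →* AddMonoid.End (ZMod (m ^ 2) × ZMod m) where
  toFun k := planeFlow m k.toAdd
  map_one' := planeFlow_zero
  map_mul' k l := planeFlow_add k.toAdd l.toAdd

lemma planeBracket_planeFlow (k : ZMod m) (u v : ZMod (m ^ 2) × ZMod m) :
    (planeBracket m).toHom (planeFlow m k u) (planeFlow m k v) =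
      planeFlow m k ((planeBracket m).toHom u v) := by
  rw [planeBracket_apply, zmodProj_planeFlow_fst, zmodProj_planeFlow_fst]
  simp only [planeBracket_apply, planeFlow_apply, zmodProj_zmodIncl, mul_zero, add_zero, map_zero]
  congr 2
  ring

end ZModSelfExtension

/-- The Baer group of the Lie ring `ℤ/m² × ℤ/m` with `[s, y] = m • y`. -/
abbrev PlaneGroup (m : ℕ) [Invertible (2 : ZMod m)] := BaerGroup (planeBracket m)

namespace PlaneGroup

open BaerGroup

variable (m : ℕ) [Invertible (2 : ZMod m)]

/-- The generator `y` of the plane group. -/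
def y : PlaneGroup m := exp (1, 0)

/-- The element `s₂` of the theorem, that is `y⁻¹ * exp D y`. In the Baer group law this is
`s + m • y` and not the Lie generator `s = (0, 1)`. -/
def s : PlaneGroup m := exp (zmodIncl m 1, 1)

/-- The central element `y ^ m`. -/
def z : PlaneGroup m := exp (zmodIncl m 1, 0)

variable {m}

lemma y_pow : y m ^ m = z m := by
  ext <;> simp [log_pow, y, z, zmodIncl_one]

lemma zpow_y (k : ℤ) : y m ^ k = exp ((k : ZMod (m ^ 2)), 0) := by
  ext <;> simp [log_zpow, y]

lemma zpow_z (k : ℤ) : z m ^ k = exp (k • zmodIncl m 1, 0) := by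
  ext <;> simp [log_zpow, z]

lemma comm'_s_y : comm' (s m) (y m) = z m := by
  ext <;> simp [log_comm', planeBracket_apply, s, y, z, two_mul, zmodIncl_invOf_two_add_self]

lemma exists_eq_exp_mul_zpow_s (g : PlaneGroup m) :
    ∃ (a : ZMod (m ^ 2)) (k : ℤ), zmodProj m a = zmodProj m g.log.1 ∧ g = exp (a, 0) * s m ^ k := by
  obtain ⟨k, hk⟩ := ZMod.intCast_surjective g.log.2
  have hsnd : (g * s m ^ (-k)).log.2 = 0 := by
    simp [log_mul, log_zpow, -zpow_neg, planeBracket_apply, s, hk]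
  refine ⟨(g * s m ^ (-k)).log.1, k, ?_, ?_⟩
  · simp [log_mul, log_zpow, -zpow_neg, planeBracket_apply, s, zmodProj_zmodIncl]
  · rw [← hsnd, zpow_neg]
    exact (inv_mul_cancel_right g (s m ^ k)).symm

lemma mem_of_y_mem_of_s_mem {K : Subgroup (PlaneGroup m)} (hy : y m ∈ K) (hs : s m ∈ K)
    (g : PlaneGroup m) : g ∈ K := by
  obtain ⟨a, k, -, rfl⟩ := exists_eq_exp_mul_zpow_s g
  obtain ⟨l, rfl⟩ := ZMod.intCast_surjective a
  exact mul_mem (zpow_y (m := m) l ▸ zpow_mem hy l) (zpow_mem hs k)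

lemma mem_of_z_mem_of_s_mem {K : Subgroup (PlaneGroup m)} (hz : z m ∈ K) (hs : s m ∈ K)
    {g : PlaneGroup m} (hg : zmodProj m g.log.1 = 0) : g ∈ K := by
  obtain ⟨a, k, ha, rfl⟩ := exists_eq_exp_mul_zpow_s g
  obtain ⟨l, rfl⟩ := exists_zsmul_zmodIncl_one_of_zmodProj_eq_zero (ha.trans hg)
  exact mul_mem (zpow_z (m := m) l ▸ zpow_mem hz l) (zpow_mem hs k)

lemma mul_comm_of_zmodProj_eq_zero {g h : PlaneGroup m} (hg : zmodProj m g.log.1 = 0)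
    (hh : zmodProj m h.log.1 = 0) : g * h = h * g := by
  apply commute_of_toHom_eq_zero
  rw [planeBracket_apply, hg, hh, mul_zero, zero_mul, sub_zero, mul_zero, map_zero,
    Prod.mk_zero_zero]

lemma card_eq : Nat.card (PlaneGroup m) = m ^ 3 := by
  have logEquiv : PlaneGroup m ≃ ZMod (m ^ 2) × ZMod m := ⟨log, exp, fun _ => rfl, fun _ => rfl⟩
  rw [Nat.card_congr logEquiv, Nat.card_prod, Nat.card_zmod, Nat.card_zmod, ← pow_succ]

end PlaneGroup

/-- The action of `ℤ/n` on the plane group through the flow of the derivation `D`. -/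
def planeAction {m n : ℕ} [Invertible (2 : ZMod m)] (hmn : m ∣ n) :
    Multiplicative (ZMod n) →* MulAut (PlaneGroup m) :=
  (BaerGroup.autHom (planeFlowHom m) fun k => planeBracket_planeFlow k.toAdd).comp
    (AddMonoidHom.toMultiplicative (ZMod.castHom hmn (ZMod m)).toAddMonoidHom)

/-- The semidirect product of the plane group with `ℤ/n`. For `m = 3` and `n = 3 ^ (e + 1)` this is
the main-trunk group of the theorem. -/
abbrev TrunkGroup {m n : ℕ} [Invertible (2 : ZMod m)] (hmn : m ∣ n) :=
  PlaneGroup m ⋊[planeAction hmn] Multiplicative (ZMod n)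

namespace TrunkGroup

open SemidirectProduct BaerGroup

variable {m n : ℕ} [Invertible (2 : ZMod m)] (hmn : m ∣ n)

/-- The generator `x`. The sign makes conjugation `g ↦ x⁻¹ * g * x` act as `exp D`. -/
def x : TrunkGroup hmn := inr (Multiplicative.ofAdd (-1))

/-- The generator `y`. -/
def y : TrunkGroup hmn := inl (PlaneGroup.y m)

lemma x_zpow (k : ℤ) : x hmn ^ k = inr (Multiplicative.ofAdd (-k : ZMod n)) := by
  rw [x, ← map_zpow, ← ofAdd_zsmul, zsmul_eq_mul, mul_neg_one]

lemma planeAction_apply (k : ZMod n) (g : PlaneGroup m) :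
    planeAction hmn (Multiplicative.ofAdd k) g =
      exp (planeFlow m (ZMod.castHom hmn (ZMod m) k) g.log) :=
  rfl

lemma comm'_inl_x (g : PlaneGroup m) :
    comm' (inl g) (x hmn) = inl (g⁻¹ * exp (planeFlow m 1 g.log)) := by
  rw [x, comm'_inl_inr, ← ofAdd_neg, neg_neg, planeAction_apply, map_one]

lemma comm'_y_x : comm' (y hmn) (x hmn) = inl (PlaneGroup.s m) := by
  rw [y, comm'_inl_x]
  congr 1
  ext
  · simp [log_mul, log_inv, planeFlow_apply, planeBracket_apply, PlaneGroup.s, PlaneGroup.y,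
      zmodIncl_invOf_two_add_self]
  · simp [log_mul, log_inv, planeFlow_apply, PlaneGroup.s, PlaneGroup.y, planeBracket_apply]

lemma comm'_inl_s_x : comm' (inl (PlaneGroup.s m)) (x hmn) = inl (PlaneGroup.z m) := by
  rw [comm'_inl_x]
  congr 1
  ext <;> simp [log_mul, log_inv, planeFlow_apply, planeBracket_apply, PlaneGroup.s, PlaneGroup.z,
    zmodProj_zmodIncl]

lemma sgen_three : sgen (x hmn) (y hmn) 3 = inl (PlaneGroup.z m) := by
  rw [sgen, sgen, comm'_y_x, comm'_inl_s_x]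

lemma tgenD_three : tgenD (x hmn) (y hmn) 3 = inl (PlaneGroup.z m) := by
  rw [tgenD, sgen, comm'_y_x, y, ← map_comm', PlaneGroup.comm'_s_y]

lemma x_pow : x hmn ^ n = 1 := by
  simpa using x_zpow hmn n

lemma y_pow : y hmn ^ m = inl (PlaneGroup.z m) := by
  rw [y, ← map_pow, PlaneGroup.y_pow]

lemma closure_x_y : Subgroup.closure {x hmn, y hmn} = ⊤ := by
  have hx : x hmn ∈ Subgroup.closure {x hmn, y hmn} := Subgroup.mem_closure_of_mem (by simp)
  have hy : y hmn ∈ Subgroup.closure {x hmn, y hmn} := Subgroup.mem_closure_of_mem (by simp)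
  refine (Subgroup.eq_top_iff' _).2 fun g => ?_
  have hs : inl (PlaneGroup.s m) ∈ Subgroup.closure {x hmn, y hmn} :=
    comm'_y_x hmn ▸ comm'_mem hy hx
  rw [← inl_left_mul_inr_right g]
  refine mul_mem ?_ ?_
  · exact PlaneGroup.mem_of_y_mem_of_s_mem
      (K := (Subgroup.closure {x hmn, y hmn}).comap inl) hy hs g.left
  · obtain ⟨k, hk⟩ := ZMod.intCast_surjective g.right.toAdd
    have hxk : x hmn ^ (-k) = inr g.right := by
      rw [x_zpow, Int.cast_neg, neg_neg, hk, ofAdd_toAdd]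
    exact hxk ▸ zpow_mem hx _

lemma card_eq : Nat.card (TrunkGroup hmn) = m ^ 3 * n := by
  rw [SemidirectProduct.card, PlaneGroup.card_eq, Nat.card_congr Multiplicative.toAdd,
    Nat.card_zmod]

lemma zmodProj_planeAction (k : Multiplicative (ZMod n)) (g : PlaneGroup m) :
    zmodProj m (planeAction hmn k g).log.1 = zmodProj m g.log.1 :=
  zmodProj_planeFlow_fst _ _

/-- The exponents of `x⁻¹` and `y`, which realise the abelianization of the trunk group. -/
def exponents : TrunkGroup hmn →* Multiplicative (ZMod n × ZMod m) where
  toFun g := Multiplicative.ofAdd (g.right.toAdd, zmodProj m g.left.log.1)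
  map_one' := by simp [log_one]
  map_mul' g h := by
    simp [log_mul, planeBracket_apply, zmodProj_zmodIncl, zmodProj_planeAction, ← ofAdd_add]

lemma exponents_surjective : Function.Surjective (exponents hmn) := fun t => by
  obtain ⟨a, ha⟩ := ZMod.castHom_surjective (dvd_pow_self m two_ne_zero) t.toAdd.2
  exact ⟨⟨exp (a, 0), Multiplicative.ofAdd t.toAdd.1⟩,
    congrArg (fun b => Multiplicative.ofAdd (t.toAdd.1, b)) ha⟩

lemma mem_ker_exponents {g : TrunkGroup hmn} :
    g ∈ (exponents hmn).ker ↔ ∃ h : PlaneGroup m, zmodProj m h.log.1 = 0 ∧ inl h = g := by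
  rw [MonoidHom.mem_ker]
  constructor
  · intro hg
    have hright : g.right = 1 := congrArg (fun t => t.toAdd.1) hg
    exact ⟨g.left, congrArg (fun t => t.toAdd.2) hg, SemidirectProduct.ext rfl hright.symm⟩
  · rintro ⟨h, hh, rfl⟩
    exact congrArg (fun b => Multiplicative.ofAdd ((0 : ZMod n), b)) hh

lemma ker_exponents : (exponents hmn).ker = commutator (TrunkGroup hmn) := by
  apply le_antisymm _ (Abelianization.commutator_subset_ker _)
  intro g hg
  obtain ⟨h, hh, rfl⟩ := (mem_ker_exponents hmn).1 hg
  have hs : inl (PlaneGroup.s m) ∈ commutator (TrunkGroup hmn) :=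
    comm'_y_x hmn ▸ comm'_mem_commutator _ _
  have hz : inl (PlaneGroup.z m) ∈ commutator (TrunkGroup hmn) :=
    comm'_inl_s_x hmn ▸ comm'_mem_commutator _ _
  exact PlaneGroup.mem_of_z_mem_of_s_mem (K := (commutator (TrunkGroup hmn)).comap inl) hz hs hh

lemma isMetabelian : IsMetabelian (TrunkGroup hmn) := by
  rw [isMetabelian_iff_commutator_le_centralizer, ← ker_exponents]
  intro t ht
  rw [Subgroup.mem_centralizer_iff]
  intro u hu
  obtain ⟨g, hg, rfl⟩ := (mem_ker_exponents hmn).1 ht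
  obtain ⟨h, hh, rfl⟩ := (mem_ker_exponents hmn).1 hu
  rw [← map_mul, ← map_mul, PlaneGroup.mul_comm_of_zmodProj_eq_zero hh hg]

/-- The abelianization of the trunk group is `ℤ/n × ℤ/m`. -/
noncomputable def abelianizationEquiv :
    Abelianization (TrunkGroup hmn) ≃* Multiplicative (ZMod n × ZMod m) :=
  (QuotientGroup.quotientMulEquivOfEq (ker_exponents hmn).symm).trans
    (QuotientGroup.quotientKerEquivOfSurjective _ (exponents_surjective hmn))

end TrunkGroup

theorem stmt4_general {m n : ℕ} (hm : Odd m) (hn : n ≠ 0) (hmn : m ∣ n) :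
    ∃ (T : Type) (_ : Group T) (_ : Finite T) (x y : T),
      Subgroup.closure {x, y} = ⊤ ∧
      Nat.card T = m ^ 3 * n ∧
      IsMetabelian T ∧
      x ^ n = 1 ∧
      y ^ m = sgen x y 3 ∧
      tgenD x y 3 = sgen x y 3 ∧
      Nonempty (Abelianization T ≃* Multiplicative (ZMod n × ZMod m)) := by
  have isUnit_two : IsUnit (2 : ZMod m) :=
    (ZMod.isUnit_iff_coprime 2 m).2 (Nat.coprime_two_left.2 hm)
  let := isUnit_two.invertible
  have card_ne_zero : Nat.card (TrunkGroup hmn) ≠ 0 :=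
    TrunkGroup.card_eq hmn ▸ mul_ne_zero (pow_ne_zero 3 hm.pos.ne') hn
  exact ⟨TrunkGroup hmn, inferInstance, Nat.finite_of_card_ne_zero card_ne_zero,
    TrunkGroup.x hmn, TrunkGroup.y hmn, TrunkGroup.closure_x_y hmn, TrunkGroup.card_eq hmn,
    TrunkGroup.isMetabelian hmn, TrunkGroup.x_pow hmn,
    (TrunkGroup.y_pow hmn).trans (TrunkGroup.sgen_three hmn).symm,
    (TrunkGroup.tgenD_three hmn).trans (TrunkGroup.sgen_three hmn).symm,
    ⟨TrunkGroup.abelianizationEquiv hmn⟩⟩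

theorem stmt4 (e : ℕ) (he : 3 ≤ e) :
    ∃ (T : Type) (_ : Group T) (_ : Finite T) (x y : T),
      Subgroup.closure {x, y} = ⊤ ∧
      Nat.card T = 3 ^ (e + 4) ∧
      IsMetabelian T ∧
      x ^ 3 ^ (e + 1) = 1 ∧
      y ^ 3 = sgen x y 3 ∧
      tgenD x y 3 = sgen x y 3 ∧
      Nonempty (Abelianization T ≃* Multiplicative (ZMod (3 ^ (e + 1)) × ZMod 3)) := by
  have card_eq : 3 ^ (e + 4) = 3 ^ 3 * 3 ^ (e + 1) := by ring
  rw [card_eq]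
  exact stmt4_general (by decide) (by positivity) (dvd_pow_self 3 e.succ_ne_zero)
end
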